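/- Let k be an integral domain, W a set, V = W →₀ k the free k-module with basis W, and Π a simple terminating term-rewriting system on V with respect to W. Suppose ≤ is a well-order on W compatible with Π. Then Π is confluent if and only if every basis element w ∈ W (regarded as the element 1·w of V) is locally confluent. -/

import Mathlib

/-- A term-rewriting system `Rw ⊆ W × (W →₀ k)` is simple if for every rule
`t → v`, the basis element `t` does not occur in the support of `v`. -/
def IsSimpleTRS {k W : Type*} [CommRing k] [IsDomain k]
    (Rw : W → (W →₀ k) → Prop) : Prop :=
  ∀ t v, Rw t v → t ∉ v.support

/-- One-step rewriting: `f →_Π g` if there is a rule `t → v` such that the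
coefficient of `t` in `f` is nonzero and `g = f - (f t)·t + (f t)·v`. -/
def OneStep {k W : Type*} [CommRing k] [IsDomain k]
    (Rw : W → (W →₀ k) → Prop) (f g : W →₀ k) : Prop :=
  ∃ t v, Rw t v ∧ f t ≠ 0 ∧ g = f - Finsupp.single t (f t) + f t • v

/-- `f` and `g` are joinable: both rewrite to a common element. -/
def Joinable {k W : Type*} [CommRing k] [IsDomain k]
    (Rw : W → (W →₀ k) → Prop) (f g : W →₀ k) : Prop :=
  ∃ u, Relation.ReflTransGen (OneStep Rw) f u ∧
    Relation.ReflTransGen (OneStep Rw) g u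

open Classical in
/-- Candidate normal form of a basis element, by well-founded recursion. -/
noncomputable def basisNF {k W : Type*} [CommRing k] [IsDomain k]
    [LinearOrder W] [WellFoundedLT W]
    (Rw : W → (W →₀ k) → Prop) : W → (W →₀ k) :=
  (wellFounded_lt (α := W)).fix (fun w rec =>
    if h : ∃ v, Rw w v then
      h.choose.sum (fun s c => c • (if hs : s < w then rec s hs else 0))
    else Finsupp.single w 1)

theorem basisNF_irred {k W : Type*} [CommRing k] [IsDomain k]
    [LinearOrder W] [WellFoundedLT W]
    (Rw : W → (W →₀ k) → Prop) (w : W) (h : ¬ ∃ v, Rw w v) :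
    basisNF Rw w = Finsupp.single w 1 := by
  unfold basisNF
  rw [WellFounded.fix_eq, dif_neg h]

theorem basisNF_red {k W : Type*} [CommRing k] [IsDomain k]
    [LinearOrder W] [WellFoundedLT W]
    (Rw : W → (W →₀ k) → Prop)
    (hcompat : ∀ t v, Rw t v → ∀ s ∈ v.support, s < t)
    (w : W) (h : ∃ v, Rw w v) :
    ∃ v, Rw w v ∧ basisNF Rw w = Finsupp.linearCombination k (basisNF Rw) v := by
  refine ⟨h.choose, h.choose_spec, ?_⟩
  conv_lhs => unfold basisNF
  rw [WellFounded.fix_eq, dif_pos h, Finsupp.linearCombination_apply]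
  refine Finsupp.sum_congr (fun s hs => ?_)
  rw [dif_pos (hcompat _ _ h.choose_spec s hs)]
  rfl

/-- Steps at terms below `t` preserve the linear extension of `basisNF`. -/
theorem nf_preserved {k W : Type*} [CommRing k] [IsDomain k]
    [LinearOrder W]
    (Rw : W → (W →₀ k) → Prop)
    (hcompat : ∀ t v, Rw t v → ∀ s ∈ v.support, s < t)
    (N : W → (W →₀ k)) (t : W)
    (hN : ∀ s, s < t → ∀ v, Rw s v → N s = Finsupp.linearCombination k N v)
    (f g : W →₀ k) (hf : ∀ s, f s ≠ 0 → s < t)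
    (hfg : Relation.ReflTransGen (OneStep Rw) f g) :
    (∀ s, g s ≠ 0 → s < t) ∧
      Finsupp.linearCombination k N g = Finsupp.linearCombination k N f := by
  induction hfg with
  | refl => exact ⟨hf, rfl⟩
  | tail _ hstep ih =>
    obtain ⟨ih1, ih2⟩ := ih
    obtain ⟨s, v, hr, hne, rfl⟩ := hstep
    have hst := ih1 s hne
    refine ⟨fun x hx => ?_, ?_⟩
    · by_contra hlt
      apply hx
      have hxs : s ≠ x := by rintro rfl; exact hlt hst
      have hvx : v x = 0 := by
        by_contra hv
        exact hlt ((hcompat s v hr x (Finsupp.mem_support_iff.2 hv)).trans hst)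
      rename_i b _
      have hbx : b x = 0 := by
        by_contra hb
        exact hlt (ih1 x hb)
      simp [hvx, hbx, Finsupp.single_eq_of_ne hxs.symm]
    · rw [← ih2]
      simp [hN s hst v hr]

theorem nf_rule {k W : Type*} [CommRing k] [IsDomain k]
    [LinearOrder W] [WellFoundedLT W]
    (Rw : W → (W →₀ k) → Prop)
    (hcompat : ∀ t v, Rw t v → ∀ s ∈ v.support, s < t)
    (hloc : ∀ w : W, ∀ g h : W →₀ k, OneStep Rw (Finsupp.single w 1) g →
        OneStep Rw (Finsupp.single w 1) h → Joinable Rw g h) (t : W) :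
    ∀ v, Rw t v → basisNF Rw t = Finsupp.linearCombination k (basisNF Rw) v := by
  induction t using WellFoundedLT.induction with
  | ind t ih =>
    intro v hv
    obtain ⟨v', hv', he⟩ := basisNF_red Rw hcompat t ⟨v, hv⟩
    have hs : ∀ v, Rw t v → OneStep Rw (Finsupp.single t 1) v := fun v hv =>
      ⟨t, v, hv, by simp, by simp⟩
    obtain ⟨u, h1, h2⟩ := hloc t v v' (hs v hv) (hs v' hv')
    have hb : ∀ v, Rw t v → ∀ s, v s ≠ 0 → s < t := fun v hv s hne =>
      hcompat t v hv s (Finsupp.mem_support_iff.2 hne)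
    rw [he, ← (nf_preserved Rw hcompat _ t ih v u (hb v hv) h1).2,
      ← (nf_preserved Rw hcompat _ t ih v' u (hb v' hv') h2).2]

theorem exists_irred {α : Type*} (R : α → α → Prop)
    (hterm : ¬ ∃ F : ℕ → α, ∀ n, R (F n) (F (n + 1))) (f : α) :
    ∃ u, Relation.ReflTransGen R f u ∧ ∀ g, ¬ R u g := by
  by_contra hcon
  push Not at hcon
  choose! nxt hn using hcon
  apply hterm
  have key : ∀ n : ℕ, Relation.ReflTransGen R f (nxt^[n] f) := by
    intro n
    induction n with
    | zero => exact .refl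
    | succ n ih =>
      rw [Function.iterate_succ_apply']
      exact ih.tail (hn _ ih)
  refine ⟨fun n => nxt^[n] f, fun n => ?_⟩
  simp only [Function.iterate_succ_apply']
  exact hn _ (key n)

/-- Let `Π` be a simple terminating term-rewriting system compatible with a
well-order on `W`. Then `Π` is confluent iff every basis element `w ∈ W`
(i.e. the element `1·w` of `V`) is locally confluent. -/
theorem confluent_iff_basis_locally_confluent
    {k W : Type*} [CommRing k] [IsDomain k]
    [LinearOrder W] [WellFoundedLT W]
    (Rw : W → (W →₀ k) → Prop) (hsimple : IsSimpleTRS Rw)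
    (hterm : ¬ ∃ F : ℕ → (W →₀ k), ∀ n, OneStep Rw (F n) (F (n + 1)))
    (hcompat : ∀ t v, Rw t v → ∀ s ∈ v.support, s < t) :
    (∀ f g h : W →₀ k, Relation.ReflTransGen (OneStep Rw) f g →
        Relation.ReflTransGen (OneStep Rw) f h → Joinable Rw g h) ↔
    (∀ w : W, ∀ g h : W →₀ k, OneStep Rw (Finsupp.single w 1) g →
        OneStep Rw (Finsupp.single w 1) h → Joinable Rw g h) := by
  constructor
  · intro H w g h hg hh
    exact H _ g h (.single hg) (.single hh)
  · intro hloc f g h hg hh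
    have hrule := nf_rule Rw hcompat hloc
    have hpres : ∀ a b, Relation.ReflTransGen (OneStep Rw) a b →
        Finsupp.linearCombination k (basisNF Rw) b =
          Finsupp.linearCombination k (basisNF Rw) a := by
      intro a b hab
      induction hab with
      | refl => rfl
      | tail _ hstep ih =>
        obtain ⟨s, v, hr, hne, rfl⟩ := hstep
        rw [← ih]
        simp [hrule s v hr]
    have hirr : ∀ u, (∀ g, ¬ OneStep Rw u g) →
        Finsupp.linearCombination k (basisNF Rw) u = u := by
      intro u hu
      rw [Finsupp.linearCombination_apply]
      conv_rhs => rw [← Finsupp.sum_single u]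
      refine Finsupp.sum_congr (fun s hs => ?_)
      rw [basisNF_irred Rw s]
      · simp
      · rintro ⟨v, hv⟩
        exact hu _ ⟨s, v, hv, Finsupp.mem_support_iff.1 hs, rfl⟩
    obtain ⟨g', hg', ig⟩ := exists_irred _ hterm g
    obtain ⟨h', hh', ih⟩ := exists_irred _ hterm h
    have e : g' = h' := by
      rw [← hirr g' ig, ← hirr h' ih, hpres _ _ hg', hpres _ _ hh', hpres _ _ hg, hpres _ _ hh]
    exact ⟨g', hg', e ▸ hh'⟩
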